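/- arXiv:1905.06459 — 4 statements merged into one kernel-verified Lean document; each statement's English description precedes it below -/
import Mathlib

section
/- Let k ≥ 4 and let H be a 2-covering k-hypergraph of order n with at least two edges. If (k, n) = (4, 6), or n ≤ 2k − 3, then H is eulerian. -/
/-- A closed walk of length `k` in a hypergraph on vertex type `V` whose edges are
finite sets of vertices: an alternating sequence of vertices and edges such that
consecutive vertices are distinct and both lie in the interposed edge, and the
first vertex equals the last. -/
def IsClosedWalk {V : Type} (k : ℕ) (v : Fin (k + 1) → V) (e : Fin k → Finset V) : Prop :=
  v 0 = v (Fin.last k) ∧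
    ∀ i : Fin k, v i.castSucc ≠ v i.succ ∧ v i.castSucc ∈ e i ∧ v i.succ ∈ e i

/-- The multiset of edges traversed by a walk (with multiplicity). -/
def walkEdges {V : Type} {k : ℕ} (e : Fin k → Finset V) : Multiset (Finset V) :=
  Multiset.ofList (List.ofFn e)

/-- A hypergraph, given by its edge multiset `E` over vertex type `V`, is eulerian if it
admits a closed walk whose multiset of traversed edges is exactly `E`, i.e. a closed
strict trail traversing every edge exactly once (a trivial walk works iff `E = 0`,
matching the convention that a trivial walk is an Euler tour of an edgeless
hypergraph). -/
def IsEulerian {V : Type} (E : Multiset (Finset V)) : Prop :=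
  ∃ (k : ℕ) (v : Fin (k + 1) → V) (e : Fin k → Finset V),
    IsClosedWalk k v e ∧ walkEdges e = E

/-- An `l`-covering `k`-hypergraph on vertex type `V`: a nonempty `k`-uniform edge
multiset such that every `l`-element subset of the vertex set is contained in at
least one edge. -/
def IsCoveringHypergraph {V : Type} [DecidableEq V] (E : Multiset (Finset V))
    (l k : ℕ) : Prop :=
  E ≠ 0 ∧ (∀ f ∈ E, f.card = k) ∧
    ∀ s : Finset V, s.card = l → ∃ f ∈ E, s ⊆ f

/-!
Let every edge have at least `k ≥ 3` vertices and let there be at most `2k - 2` vertices in all.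
Then any two edges share at least two vertices, so a walk that enters an edge at `x` can leave it
towards any prescribed next edge at a vertex different from `x`. Two edges form a closed walk
between two common vertices. If there are more, pick three edges `d`, `e`, `f`, start at a vertex
`x ∈ e ∩ f` and traverse `f` and then all other edges greedily, reaching `d` at a vertex `y`. The
tour closes up through `d` and `e` as soon as `d ∩ e` has two vertices besides `x`, one of which
then differs from `y`. If `|d ∩ e| ≥ 3`, every `x` will do. If `|d ∩ e| = 2`, then `d ∪ e` is the
whole vertex set, and `f`, having at least three vertices, contains some `x ∉ d ∩ e`; this `x` lies
in `e` after exchanging `d` and `e` if necessary.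
-/

/-- `IsWalk x l y` says that some walk from `x` to `y` traverses exactly the edges of the list `l`,
in this order. Only the edges are recorded, as they are all that matters for an Euler tour. -/
inductive IsWalk {V : Type*} : V → List (Finset V) → V → Prop
  | nil (x : V) : IsWalk x [] x
  | cons {x y z : V} {f : Finset V} {l : List (Finset V)} (hne : x ≠ y) (hx : x ∈ f) (hy : y ∈ f)
      (h : IsWalk y l z) : IsWalk x (f :: l) z

namespace IsWalk

section

variable {V : Type*} {x y z : V} {l m : List (Finset V)}

theorem append (hl : IsWalk x l y) (hm : IsWalk y m z) : IsWalk x (l ++ m) z := by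
  induction hl with
  | nil => exact hm
  | cons hne hx hy _ ih => exact cons hne hx hy (ih hm)

theorem exists_vertices (h : IsWalk x l y) :
    ∃ v : Fin (l.length + 1) → V, v 0 = x ∧ v (Fin.last _) = y ∧
      ∀ i : Fin l.length, v i.castSucc ≠ v i.succ ∧ v i.castSucc ∈ l.get i ∧
        v i.succ ∈ l.get i := by
  induction h with
  | nil x => exact ⟨fun _ ↦ x, rfl, rfl, fun i ↦ i.elim0⟩
  | @cons x _ _ _ _ hne hx hy _ ih =>
    obtain ⟨v, rfl, hlast, hv⟩ := ih
    exact ⟨Fin.cons x v, rfl, hlast, Fin.cases ⟨hne, hx, hy⟩ hv⟩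

theorem exists_of_isChain_nontrivial_inter [DecidableEq V] {d f : Finset V} (hx : x ∈ f)
    (h : (f :: (l ++ [d])).IsChain fun a b ↦ (a ∩ b).Nontrivial) :
    ∃ y ∈ d, IsWalk x (f :: l) y := by
  induction l generalizing f x with
  | nil =>
    obtain ⟨y, hy, hne⟩ := (List.isChain_pair.mp h).exists_ne x
    obtain ⟨hyf, hyd⟩ := Finset.mem_inter.mp hy
    exact ⟨y, hyd, cons hne.symm hx hyf (nil y)⟩
  | cons g l ih =>
    obtain ⟨hfg, hchain⟩ := List.isChain_cons_cons.mp h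
    obtain ⟨y, hy, hne⟩ := hfg.exists_ne x
    obtain ⟨hyf, hyg⟩ := Finset.mem_inter.mp hy
    obtain ⟨z, hz, hwalk⟩ := ih hyg hchain
    exact ⟨z, hz, cons hne.symm hx hyf hwalk⟩

end

theorem isEulerian {V : Type} {x : V} {l : List (Finset V)} (h : IsWalk x l x) :
    IsEulerian (l : Multiset (Finset V)) := by
  obtain ⟨v, hfirst, hlast, hv⟩ := h.exists_vertices
  exact ⟨l.length, v, l.get, ⟨hfirst.trans hlast.symm, hv⟩, congrArg _ (List.ofFn_get l)⟩

end IsWalk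

section

variable {V : Type} [DecidableEq V]

theorem isEulerian_pair {a b : Finset V} (h : (a ∩ b).Nontrivial) :
    IsEulerian {a, b} := by
  obtain ⟨x, hx, y, hy, hne⟩ := h
  obtain ⟨hxa, hxb⟩ := Finset.mem_inter.mp hx
  obtain ⟨hya, hyb⟩ := Finset.mem_inter.mp hy
  exact (IsWalk.cons hne hxa hya (.cons hne.symm hyb hxb (.nil x))).isEulerian

theorem isEulerian_of_nontrivial_erase_inter {d e f : Finset V} {l : List (Finset V)} {x : V}
    (hchain : (f :: (l ++ [d])).IsChain fun a b ↦ (a ∩ b).Nontrivial)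
    (hxe : x ∈ e) (hxf : x ∈ f) (hde : ((d ∩ e).erase x).Nontrivial) :
    IsEulerian ((d :: e :: f :: l : List (Finset V)) : Multiset (Finset V)) := by
  obtain ⟨y, hyd, hwalk⟩ := IsWalk.exists_of_isChain_nontrivial_inter hxf hchain
  obtain ⟨z, hz, hzy⟩ := hde.exists_ne y
  obtain ⟨hzx, hz⟩ := Finset.mem_erase.mp hz
  obtain ⟨hzd, hze⟩ := Finset.mem_inter.mp hz
  have hreturn : IsWalk y [d, e] x := .cons hzy.symm hyd hzd (.cons hzx hze hxe (.nil x))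
  have hperm : (f :: l ++ [d, e]).Perm (d :: e :: f :: l) := List.perm_append_comm
  exact Multiset.coe_eq_coe.mpr hperm ▸ (hwalk.append hreturn).isEulerian

theorem isEulerian_of_mem_union {d e f : Finset V} {l : List (Finset V)} {x : V}
    (hl : ∀ a ∈ d :: e :: f :: l, ∀ b ∈ d :: e :: f :: l, (a ∩ b).Nontrivial)
    (hxf : x ∈ f) (hx : x ∈ d ∪ e) (hde : ((d ∩ e).erase x).Nontrivial) :
    IsEulerian ((d :: e :: f :: l : List (Finset V)) : Multiset (Finset V)) := by
  have hchain : ∀ c ∈ [d, e], (f :: (l ++ [c])).IsChain fun a b ↦ (a ∩ b).Nontrivial := by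
    intro c hc
    refine (List.pairwise_of_forall_mem_list fun a ha b hb ↦ hl a ?_ b ?_).isChain <;> grind
  rcases Finset.mem_union.mp hx with hxd | hxe
  · rw [Multiset.coe_eq_coe.mpr (.swap e d (f :: l))]
    exact isEulerian_of_nontrivial_erase_inter (hchain e (by simp)) hxd hxf
      (Finset.inter_comm d e ▸ hde)
  · exact isEulerian_of_nontrivial_erase_inter (hchain d (by simp)) hxe hxf hde

variable [Fintype V] {k : ℕ}

theorem card_add_card_le_card_inter_add_card_univ (a b : Finset V) :
    a.card + b.card ≤ (a ∩ b).card + Fintype.card V := by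
  rw [← Finset.card_inter_add_card_union]
  gcongr
  exact Finset.card_le_univ _

theorem nontrivial_inter_of_card_le (hV : Fintype.card V + 2 ≤ 2 * k) {a b : Finset V}
    (ha : k ≤ a.card) (hb : k ≤ b.card) : (a ∩ b).Nontrivial := by
  have hinter := card_add_card_le_card_inter_add_card_univ a b
  exact Finset.one_lt_card_iff_nontrivial.mp (by omega)

theorem exists_mem_union_nontrivial_erase_inter (hk : 3 ≤ k) (hV : Fintype.card V + 2 ≤ 2 * k)
    {a b c : Finset V} (ha : k ≤ a.card) (hb : k ≤ b.card) (hc : k ≤ c.card) :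
    ∃ x ∈ c, x ∈ a ∪ b ∧ ((a ∩ b).erase x).Nontrivial := by
  have hab := nontrivial_inter_of_card_le hV ha hb
  by_cases hcard : 3 ≤ (a ∩ b).card
  · obtain ⟨x, hx⟩ := (nontrivial_inter_of_card_le hV hb hc).nonempty
    obtain ⟨hxb, hxc⟩ := Finset.mem_inter.mp hx
    have herase := Finset.pred_card_le_card_erase (s := a ∩ b) (a := x)
    exact ⟨x, hxc, Finset.mem_union_right a hxb, Finset.one_lt_card_iff_nontrivial.mp (by omega)⟩
  · have hunion : a ∪ b = Finset.univ := by
      refine (Finset.card_eq_iff_eq_univ _).mp (le_antisymm (Finset.card_le_univ _) ?_)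
      have hsum := Finset.card_inter_add_card_union a b
      omega
    obtain ⟨x, hxc, hx⟩ := Finset.exists_mem_notMem_of_card_lt_card (s := a ∩ b) (t := c) (by omega)
    exact ⟨x, hxc, hunion ▸ Finset.mem_univ x, (Finset.erase_eq_of_notMem hx).symm ▸ hab⟩

end

theorem twoCoveringKHypergraph_smallOrder_eulerian_general {V : Type} [Fintype V] {k : ℕ}
    {E : Multiset (Finset V)} (hk : 3 ≤ k) (hV : Fintype.card V + 2 ≤ 2 * k)
    (hE : ∀ f ∈ E, k ≤ f.card) (h2 : 2 ≤ Multiset.card E) : IsEulerian E := by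
  classical
  have hinter : ∀ a ∈ E, ∀ b ∈ E, (a ∩ b).Nontrivial := fun a ha b hb ↦
    nontrivial_inter_of_card_le hV (hE a ha) (hE b hb)
  induction E using Quot.inductionOn with | _ l
  match l, h2 with
  | [a, b], _ => exact isEulerian_pair (hinter a (by simp) b (by simp))
  | a :: b :: c :: l, _ =>
    obtain ⟨x, hxc, hx, hab⟩ := exists_mem_union_nontrivial_erase_inter hk hV
      (hE a (by simp)) (hE b (by simp)) (hE c (by simp))
    exact isEulerian_of_mem_union hinter hxc hx hab

/-- Let `k ≥ 4` and let `H` be a 2-covering `k`-hypergraph of order `n` with at least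
two edges.  If `(k, n) = (4, 6)` or `n ≤ 2k − 3`, then `H` is eulerian. -/
theorem twoCoveringKHypergraph_smallOrder_eulerian {V : Type} [Fintype V] [DecidableEq V]
    (k n : ℕ) (hk : 4 ≤ k) (hn : Fintype.card V = n) (E : Multiset (Finset V))
    (hH : IsCoveringHypergraph E 2 k) (h2 : 2 ≤ Multiset.card E)
    (hcase : (k = 4 ∧ n = 6) ∨ n ≤ 2 * k - 3) :
    IsEulerian E :=
  twoCoveringKHypergraph_smallOrder_eulerian_general (k := k) (by omega) (by omega)
    (fun f hf ↦ (hH.2.1 f hf).ge) h2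
end

section
/- Let k ≥ 4 and let H be a 2-covering k-hypergraph of order n ≥ k + 1. If n > 3k/2 or k ≥ 7, then H has at least 2·⌊(n + 3)/k⌋ edges (counted with multiplicity). -/
/-!
Put `q = ⌊(n + 3) / k⌋`. The edges through a vertex `v` cover the other `n - 1` vertices, at most
`k - 1` of them each, and `(q - 1) * (k - 1) < n - 1`, so every vertex has degree at least `q`.
Counting incidences gives `n * q ≤ |E| * k`, while `(2 * q - 1) * k < n * q`: this is clear if
`2 * k ≤ n`, and otherwise `q ≤ 2`.
-/

section VertexDegree

variable {V : Type*} [DecidableEq V] {E : Multiset (Finset V)} {k : ℕ}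

/-- The degree of a vertex in the hypergraph with edge multiset `E`: the number of edges containing
it, counted with multiplicity. -/
def vertexDegree (E : Multiset (Finset V)) (v : V) : ℕ :=
  E.countP (v ∈ ·)

variable [Fintype V]

theorem sum_vertexDegree (E : Multiset (Finset V)) :
    ∑ v, vertexDegree E v = (E.map Finset.card).sum := by
  induction E using Multiset.induction_on with
  | empty => simp [vertexDegree]
  | cons f E ih =>
    simp only [vertexDegree] at ih
    simp [vertexDegree, Multiset.countP_cons, Finset.sum_add_distrib, ih, add_comm]

theorem card_mul_le_card_mul_of_le_vertexDegree {d : ℕ} (hcard : ∀ f ∈ E, f.card ≤ k)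
    (hdeg : ∀ v, d ≤ vertexDegree E v) : Fintype.card V * d ≤ E.card * k :=
  calc Fintype.card V * d
    _ ≤ ∑ v, vertexDegree E v := Finset.card_nsmul_le_sum _ _ _ fun v _ ↦ hdeg v
    _ = (E.map Finset.card).sum := sum_vertexDegree E
    _ ≤ E.card * k := by
      simpa using Multiset.sum_le_card_nsmul (E.map Finset.card) k (by simpa using hcard)

theorem card_sub_one_le_vertexDegree_mul (hcard : ∀ f ∈ E, f.card ≤ k) {v : V}
    (hcover : ∀ w, w ≠ v → ∃ f ∈ E, v ∈ f ∧ w ∈ f) :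
    Fintype.card V - 1 ≤ vertexDegree E v * (k - 1) := by
  let star := (E.filter (v ∈ ·)).toFinset
  have erase_subset : Finset.univ.erase v ⊆ star.biUnion (·.erase v) := fun w hw ↦ by
    have hne := Finset.ne_of_mem_erase hw
    obtain ⟨f, hf, hv, hw⟩ := hcover w hne
    simpa [star, hne] using ⟨f, ⟨hf, hv⟩, hw⟩
  have card_erase_le : ∀ f ∈ star, (f.erase v).card ≤ k - 1 := fun f hf ↦ by
    obtain ⟨hf, hv⟩ : f ∈ E ∧ v ∈ f := by simpa [star] using hf
    rw [Finset.card_erase_of_mem hv]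
    exact Nat.sub_le_sub_right (hcard f hf) 1
  have card_star_le : star.card ≤ vertexDegree E v := by
    rw [vertexDegree, Multiset.countP_eq_card_filter]
    exact Multiset.toFinset_card_le _
  calc Fintype.card V - 1
    _ = (Finset.univ.erase v).card := by
      rw [Finset.card_erase_of_mem (Finset.mem_univ v), Finset.card_univ]
    _ ≤ (star.biUnion (·.erase v)).card := Finset.card_le_card erase_subset
    _ ≤ star.card * (k - 1) := Finset.card_biUnion_le_card_mul _ _ _ card_erase_le
    _ ≤ vertexDegree E v * (k - 1) := Nat.mul_le_mul_right _ card_star_le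

end VertexDegree

section Arithmetic

variable {k n q : ℕ}

theorem pred_mul_pred_lt_pred (hk : 0 < k) (hkn : k < n) (hcase : 2 * k ≤ n + 3 → 3 * k < 2 * n)
    (hq : q * k ≤ n + 3) : (q - 1) * (k - 1) < n - 1 := by
  obtain hq_le | hq_ge : q ≤ 2 ∨ 3 ≤ q := by omega
  · calc (q - 1) * (k - 1)
      _ ≤ 1 * (k - 1) := Nat.mul_le_mul_right _ (by omega)
      _ < n - 1 := by omega
  obtain rfl | rfl | hk_ge : k = 1 ∨ k = 2 ∨ 3 ≤ k := by omega
  · omega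
  · omega
  · have expand : (q - 1) * (k - 1) + q + k = q * k + 1 := by
      obtain ⟨a, rfl⟩ := Nat.exists_eq_add_of_le' hq_ge
      obtain ⟨b, rfl⟩ := Nat.exists_eq_add_of_le' hk_ge
      simp only [Nat.add_one_sub_one]
      ring
    omega

theorem two_mul_sub_one_mul_lt_mul (hk : 0 < k) (hkn : k < n)
    (hcase : 2 * k ≤ n + 3 → 3 * k < 2 * n) (hq_pos : 0 < q) (hq : q * k ≤ n + 3) :
    (2 * q - 1) * k < n * q := by
  obtain h_le | h_lt := le_or_gt (2 * k) n
  · calc (2 * q - 1) * k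
      _ < 2 * q * k := Nat.mul_lt_mul_of_pos_right (by omega) hk
      _ = 2 * k * q := by ring
      _ ≤ n * q := Nat.mul_le_mul_right q h_le
  · have hq_le : q ≤ 2 := by
      by_contra! hq_ge
      have : 3 * k ≤ q * k := Nat.mul_le_mul_right k hq_ge
      omega
    interval_cases q <;> omega

end Arithmetic

theorem twoCoveringKHypergraph_edge_lower_bound_general {V : Type*} [Fintype V]
    {E : Multiset (Finset V)} {k : ℕ} (hk : 0 < k) (hkn : k < Fintype.card V)
    (hcase : 2 * k ≤ Fintype.card V + 3 → 3 * k < 2 * Fintype.card V)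
    (hcard : ∀ f ∈ E, f.card ≤ k) (hcover : Pairwise fun v w ↦ ∃ f ∈ E, v ∈ f ∧ w ∈ f) :
    2 * ((Fintype.card V + 3) / k) ≤ E.card := by
  classical
  set n := Fintype.card V
  set q := (n + 3) / k
  have hq : q * k ≤ n + 3 := Nat.div_mul_le_self _ _
  have hq_pos : 0 < q := Nat.div_pos (by omega) hk
  have le_degree (v : V) : q ≤ vertexDegree E v := by
    have mul_lt_degree_mul : (q - 1) * (k - 1) < vertexDegree E v * (k - 1) :=
      (pred_mul_pred_lt_pred hk hkn hcase hq).trans_le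
        (card_sub_one_le_vertexDegree_mul hcard fun w hw ↦ hcover hw.symm)
    exact Nat.le_of_pred_lt (Nat.lt_of_mul_lt_mul_right mul_lt_degree_mul)
  have mul_lt_card_mul : (2 * q - 1) * k < E.card * k :=
    (two_mul_sub_one_mul_lt_mul hk hkn hcase hq_pos hq).trans_le
      (card_mul_le_card_mul_of_le_vertexDegree hcard le_degree)
  exact Nat.le_of_pred_lt (Nat.lt_of_mul_lt_mul_right mul_lt_card_mul)

theorem IsCoveringHypergraph.pairwise_exists_mem {V : Type} [DecidableEq V]
    {E : Multiset (Finset V)} {k : ℕ} (hE : IsCoveringHypergraph E 2 k) :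
    Pairwise fun v w ↦ ∃ f ∈ E, v ∈ f ∧ w ∈ f := fun v w hvw ↦ by
  simpa [Finset.insert_subset_iff] using hE.2.2 {v, w} (Finset.card_pair hvw)

/-- Let `k ≥ 4` and let `H` be a 2-covering `k`-hypergraph of order `n ≥ k + 1`.
If `n > 3k/2` or `k ≥ 7`, then `H` has at least `2⌊(n + 3)/k⌋` edges (counted with
multiplicity). -/
theorem twoCoveringKHypergraph_edge_lower_bound {V : Type} [Fintype V] [DecidableEq V]
    (k n : ℕ) (hk : 4 ≤ k) (hn : Fintype.card V = n) (hnk : k + 1 ≤ n)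
    (E : Multiset (Finset V)) (hH : IsCoveringHypergraph E 2 k)
    (hcase : 3 * k < 2 * n ∨ 7 ≤ k) :
    2 * ((n + 3) / k) ≤ Multiset.card E := by
  subst hn
  exact twoCoveringKHypergraph_edge_lower_bound_general (by omega) hnk (by omega)
    (fun f hf ↦ (hH.2.1 f hf).le) hH.pairwise_exists_mem
end

section
/- Let n, k, q be positive integers with n ≥ qk. Then for every q-tuple (x_1, …, x_q) of positive integers satisfying x_i ≥ k for all i and x_1 + ⋯ + x_q = n, one has C(x_1, 2) + ⋯ + C(x_q, 2) ≤ (q − 1)·C(k, 2) + C(n − k(q − 1), 2); that is, the tuple (k, …, k, n − k(q − 1)) maximizes Σ_i C(x_i, 2) over all such tuples. -/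
/-!
Writing `x i = k + y i`, the claim is that moving all the excesses `y i` into a single part cannot
decrease the sum. Moving the excess of one part into another cannot, because binomial coefficients
are discretely convex in the upper index: by Pascal's rule the increment of `m ↦ C(m, r)` at `m`
is `C(m, r - 1)` (for `r ≥ 1`), which is monotone in `m`.
-/

open Finset

theorem choose_add_add_choose_add_le (k a b r : ℕ) :
    (k + a).choose r + (k + b).choose r ≤ k.choose r + (k + (a + b)).choose r := by
  cases r with
  | zero => simp only [Nat.choose_zero_right, le_refl]
  | succ r =>
    induction b with
    | zero => simp only [add_zero, add_comm, le_refl]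
    | succ b ih =>
      have increment_le : (k + b).choose r ≤ (k + (a + b)).choose r :=
        Nat.choose_le_choose r (by omega)
      simp only [← add_assoc, Nat.choose_succ_succ'] at ih increment_le ⊢
      omega

-- The extra `f k` on the left replaces the coefficient `#s - 1` on the right.
theorem sum_map_add_add_le_card_nsmul_add {ι A M : Type*} [AddCommMonoid A] [AddCommMonoid M]
    [Preorder M] [AddLeftMono M] {f : A → M} {k : A}
    (hf : ∀ a b, f (k + a) + f (k + b) ≤ f k + f (k + (a + b))) (s : Finset ι) (y : ι → A) :
    ∑ i ∈ s, f (k + y i) + f k ≤ #s • f k + f (k + ∑ i ∈ s, y i) := by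
  induction s using Finset.cons_induction with
  | empty => simp only [sum_empty, card_empty, zero_nsmul, add_zero, le_refl]
  | cons j s hj ih =>
    simp only [sum_cons, card_cons, succ_nsmul]
    calc
      f (k + y j) + ∑ i ∈ s, f (k + y i) + f k
          = f (k + y j) + (∑ i ∈ s, f (k + y i) + f k) := add_assoc _ _ _
      _ ≤ f (k + y j) + (#s • f k + f (k + ∑ i ∈ s, y i)) := by gcongr
      _ = #s • f k + (f (k + y j) + f (k + ∑ i ∈ s, y i)) := add_left_comm _ _ _
      _ ≤ #s • f k + (f k + f (k + (y j + ∑ i ∈ s, y i))) := add_le_add_right (hf _ _) _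
      _ = #s • f k + f k + f (k + (y j + ∑ i ∈ s, y i)) := (add_assoc _ _ _).symm

theorem sum_choose_two_le_of_constrained_general {ι : Type*} {s : Finset ι} (hs : s.Nonempty)
    (r k : ℕ) (x : ι → ℕ) (hxk : ∀ i ∈ s, k ≤ x i) :
    ∑ i ∈ s, (x i).choose r ≤
      (#s - 1) * k.choose r + (∑ i ∈ s, x i - k * (#s - 1)).choose r := by
  obtain ⟨m, hm⟩ : ∃ m, #s = m + 1 := Nat.exists_eq_add_one.mpr hs.card_pos
  have add_excess : ∀ i ∈ s, k + (x i - k) = x i := fun i hi => Nat.add_sub_cancel' (hxk i hi)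
  have sum_eq : ∑ i ∈ s, x i = k * m + (k + ∑ i ∈ s, (x i - k)) := by
    rw [← sum_congr rfl add_excess, sum_add_distrib, sum_const, hm, smul_eq_mul]
    ring
  have merged : ∑ i ∈ s, (x i).choose r + k.choose r ≤
      (m + 1) * k.choose r + (k + ∑ i ∈ s, (x i - k)).choose r := by
    rw [← sum_congr rfl fun i hi => congrArg (Nat.choose · r) (add_excess i hi), ← hm]
    exact sum_map_add_add_le_card_nsmul_add (f := (Nat.choose · r))
      (choose_add_add_choose_add_le k · · r) s (x · - k)
  rw [hm, Nat.add_sub_cancel, sum_eq, Nat.add_sub_cancel_left]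
  linarith

/-- Let `n, k, q` be positive integers with `n ≥ qk`.  Then for every `q`-tuple
`(x_1, …, x_q)` of positive integers with `x_i ≥ k` for all `i` and `x_1 + ⋯ + x_q = n`,
one has `C(x_1, 2) + ⋯ + C(x_q, 2) ≤ (q − 1)·C(k, 2) + C(n − k(q − 1), 2)`; that is,
the tuple `(k, …, k, n − k(q − 1))` maximizes `Σᵢ C(xᵢ, 2)` over all such tuples. -/
theorem sum_choose_two_le_of_constrained (n k q : ℕ) (hn : 0 < n) (hk : 0 < k)
    (hq : 0 < q) (hnk : q * k ≤ n) (x : Fin q → ℕ) (hx0 : ∀ i, 0 < x i)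
    (hxk : ∀ i, k ≤ x i) (hsum : ∑ i, x i = n) :
    ∑ i, Nat.choose (x i) 2 ≤ (q - 1) * Nat.choose k 2 + Nat.choose (n - k * (q - 1)) 2 := by
  simpa only [card_fin, hsum] using
    sum_choose_two_le_of_constrained_general ⟨⟨0, hq⟩, mem_univ _⟩ 2 k x fun i _ => hxk i
end

section
/- Let G be a connected simple graph with at least two vertices. Then G has at least two vertices that are not cut vertices. Moreover, if G contains a cycle of length k (for some k ≥ 3), then G has at least k vertices that are not cut vertices. -/
/-- `v` is a cut vertex of `G` if deleting `v` (with all incident edges) increases the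
number of connected components. -/
def IsCutVertex {V : Type} (G : SimpleGraph V) (v : V) : Prop :=
  Nat.card G.ConnectedComponent <
    Nat.card ((G.induce {u : V | u ≠ v}).ConnectedComponent)

/-!
Call a vertex set `C` inseparable if deleting one vertex never disconnects two remaining vertices
of `C`; cliques and vertex sets of cycles are inseparable. Hang off each `x ∈ C` its branch, the
vertices that reach `C` only through `x`. Distinct branches are disjoint, and a vertex `y` of the
branch at `x` farthest from `x` is not a cut vertex: the rest of the branch reaches `x` along
geodesics missing `y`, every vertex outside the branch reaches `C` without entering it, and `C`
itself is not separated by `y`. So there are at least as many non-cut vertices as elements of `C`.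
-/

open SimpleGraph

section

variable {V : Type*} {G : SimpleGraph V} {C : Set V} {a b c v x y z : V}

/-- `a` and `b` are joined in `G - v`. Phrased with walks of `G`, so that no membership proofs in
the vertex type of `G - v` are needed; it is false when `a = v` or `b = v`. -/
def JoinedAvoiding (G : SimpleGraph V) (v a b : V) : Prop :=
  ∃ p : G.Walk a b, v ∉ p.support

namespace JoinedAvoiding

theorem left_ne (h : JoinedAvoiding G v a b) : a ≠ v := by
  obtain ⟨p, hp⟩ := h
  exact ne_of_mem_of_not_mem p.start_mem_support hp

theorem symm (h : JoinedAvoiding G v a b) : JoinedAvoiding G v b a := by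
  obtain ⟨p, hp⟩ := h
  exact ⟨p.reverse, by simpa using hp⟩

theorem right_ne (h : JoinedAvoiding G v a b) : b ≠ v :=
  h.symm.left_ne

theorem trans (hab : JoinedAvoiding G v a b) (hbc : JoinedAvoiding G v b c) :
    JoinedAvoiding G v a c := by
  obtain ⟨p, hp⟩ := hab
  obtain ⟨q, hq⟩ := hbc
  exact ⟨p.append q, by simp [Walk.mem_support_append_iff, hp, hq]⟩

theorem reachable_induce (h : JoinedAvoiding G v a b) :
    (G.induce {u | u ≠ v}).Reachable ⟨a, h.left_ne⟩ ⟨b, h.right_ne⟩ := by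
  obtain ⟨p, hp⟩ := h
  exact ⟨p.induce {u | u ≠ v} fun _ hu => ne_of_mem_of_not_mem hu hp⟩

theorem of_not_joinedAvoiding (hz : JoinedAvoiding G x z c) (hy : ¬ JoinedAvoiding G x y c) :
    JoinedAvoiding G y z c := by
  classical
  obtain ⟨p, hp⟩ := hz
  refine ⟨p, fun hyp => hy ⟨p.dropUntil y hyp, fun hx => ?_⟩⟩
  exact hp (p.support_dropUntil_subset_support hyp hx)

end JoinedAvoiding

theorem joinedAvoiding_of_isPath {p : G.Walk a v} (hp : p.IsPath) (hz : z ∈ p.support)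
    (hzv : z ≠ v) : JoinedAvoiding G v a z := by
  classical
  exact ⟨p.takeUntil z hz, Walk.endpoint_notMem_support_takeUntil hp hz hzv.symm⟩

theorem joinedAvoiding_of_dist_le (hzx : G.Reachable z x) (hzy : z ≠ y)
    (hdist : G.dist z x ≤ G.dist y x) : JoinedAvoiding G y z x := by
  classical
  obtain ⟨p, hp⟩ := hzx.exists_walk_length_eq_dist
  refine ⟨p, fun hy => hzy (Walk.eq_of_length_eq_zero (p := p.takeUntil y hy) ?_)⟩
  have hsplit : (p.takeUntil y hy).length + (p.dropUntil y hy).length = p.length := by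
    rw [← Walk.length_append, p.take_spec hy]
  have hdrop : G.dist y x ≤ (p.dropUntil y hy).length := dist_le _
  omega

/-- A vertex set that no single vertex separates: for every `v`, the vertices of `C` other than `v`
lie in one connected component of `G - v`. -/
def IsInseparable (G : SimpleGraph V) (C : Set V) : Prop :=
  ∀ ⦃v a b⦄, a ∈ C → b ∈ C → a ≠ v → b ≠ v → JoinedAvoiding G v a b

theorem isInseparable_of_isClique (hC : G.IsClique C) : IsInseparable G C := by
  intro v a b ha hb hav hbv
  obtain rfl | hab := eq_or_ne a b
  · exact ⟨.nil, by simpa using hav.symm⟩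
  · exact ⟨(hC ha hb hab).toWalk, by simpa using ⟨hav.symm, hbv.symm⟩⟩

theorem joinedAvoiding_snd_of_isCycle {p : G.Walk v v} (hp : p.IsCycle) (hz : z ∈ p.support)
    (hzv : z ≠ v) : JoinedAvoiding G v p.snd z := by
  refine joinedAvoiding_of_isPath hp.isPath_tail ?_ hzv
  rw [← Walk.cons_support_tail hp.not_nil] at hz
  exact List.mem_of_ne_of_mem hzv hz

theorem isInseparable_support_of_isCycle {p : G.Walk x x} (hp : p.IsCycle) :
    IsInseparable G {z | z ∈ p.support} := by
  classical
  suffices hbase : ∀ v, ∃ w, ∀ z ∈ p.support, z ≠ v → JoinedAvoiding G v w z by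
    intro v a b ha hb hav hbv
    obtain ⟨w, hw⟩ := hbase v
    exact (hw a ha hav).symm.trans (hw b hb hbv)
  intro v
  by_cases hv : v ∈ p.support
  · exact ⟨(p.rotate v hv).snd, fun z hz hzv => joinedAvoiding_snd_of_isCycle (hp.rotate hv)
      ((p.mem_support_rotate_iff v hv).2 hz) hzv⟩
  · exact ⟨x, fun z hz _ => ⟨p.takeUntil z hz, fun hvz =>
      hv (p.support_takeUntil_subset_support hz hvz)⟩⟩

theorem ncard_support_of_isCycle {p : G.Walk x x} (hp : p.IsCycle) :
    {z | z ∈ p.support}.ncard = p.length := by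
  classical
  have hset : {z | z ∈ p.support} = (p.tail.support.toFinset : Set V) := by
    ext z
    simp only [← Walk.cons_support_tail hp.not_nil, List.mem_cons, Set.mem_ofPred_eq,
      List.coe_toFinset, or_iff_right_iff_imp]
    rintro rfl
    exact p.tail.end_mem_support
  rw [hset, Set.ncard_coe_finset, List.toFinset_card_of_nodup hp.isPath_tail.support_nodup,
    Walk.length_support, Walk.length_tail_add_one hp.not_nil]

theorem IsInseparable.preconnected_induce_ne (hC : IsInseparable G C)
    (hjoin : ∀ z, z ≠ v → ∃ c ∈ C, JoinedAvoiding G v z c) :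
    (G.induce {u | u ≠ v}).Preconnected := by
  rintro ⟨a, ha⟩ ⟨b, hb⟩
  obtain ⟨c, hc, hac⟩ := hjoin a ha
  obtain ⟨d, hd, hbd⟩ := hjoin b hb
  have hcd : JoinedAvoiding G v c d := hC hc hd hac.right_ne hbd.right_ne
  exact (hac.trans (hcd.trans hbd.symm)).reachable_induce

/-- The branch hanging off `C` at `x`: the vertices all of whose walks to `C` pass through `x`,
including `x` itself. -/
def branch (G : SimpleGraph V) (C : Set V) (x : V) : Set V :=
  {y | ∀ c ∈ C, ¬ JoinedAvoiding G x y c}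

theorem self_mem_branch : x ∈ branch G C x :=
  fun _ _ h => h.left_ne rfl

theorem pairwiseDisjoint_branch (hG : G.Preconnected) : C.PairwiseDisjoint (branch G C) := by
  intro x hx w hw hne
  refine Set.disjoint_left.2 fun y hy hyw => ?_
  obtain ⟨p, hp⟩ := hG.exists_isPath y x
  have hwp : w ∈ p.support := by
    by_contra hwp
    exact hyw x hx ⟨p, hwp⟩
  exact hy w hw (joinedAvoiding_of_isPath hp hwp hne.symm)

theorem exists_joinedAvoiding_of_farthest_mem_branch (hG : G.Preconnected) (hx : x ∈ C)
    (hy : y ∈ branch G C x) (hfar : ∀ z ∈ branch G C x, G.dist z x ≤ G.dist y x) (hzy : z ≠ y) :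
    ∃ c ∈ C, JoinedAvoiding G y z c := by
  by_cases hz : z ∈ branch G C x
  · exact ⟨x, hx, joinedAvoiding_of_dist_le (hG z x) hzy (hfar z hz)⟩
  · obtain ⟨c, hc, hzc⟩ : ∃ c ∈ C, JoinedAvoiding G x z c := by
      simpa [branch] using hz
    exact ⟨c, hc, hzc.of_not_joinedAvoiding (hy c hc)⟩

theorem IsInseparable.exists_mem_branch_preconnected_induce_ne [Finite V]
    (hC : IsInseparable G C) (hG : G.Preconnected) (hx : x ∈ C) :
    ∃ y ∈ branch G C x, (G.induce {u | u ≠ y}).Preconnected := by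
  obtain ⟨y, hy, hfar⟩ := Set.exists_max_image (branch G C x) (G.dist · x) (Set.toFinite _)
    ⟨x, self_mem_branch⟩
  exact ⟨y, hy, hC.preconnected_induce_ne fun _ hzy =>
    exists_joinedAvoiding_of_farthest_mem_branch hG hx hy hfar hzy⟩

end

section

variable {V : Type} {G : SimpleGraph V} {C : Set V} {v : V}

theorem not_isCutVertex_of_preconnected_induce_ne (hG : G.Connected)
    (hv : (G.induce {u | u ≠ v}).Preconnected) : ¬ IsCutVertex G v := by
  have hcard : Nat.card G.ConnectedComponent = 1 :=
    Nat.card_eq_one_iff_unique.2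
      ⟨hG.preconnected.subsingleton_connectedComponent, hG.nonempty.map G.connectedComponentMk⟩
  have := hv.subsingleton_connectedComponent
  rw [IsCutVertex, hcard, not_lt]
  exact Finite.card_le_one_iff_subsingleton.2 this

theorem IsInseparable.ncard_le_card_not_isCutVertex [Finite V] (hC : IsInseparable G C)
    (hG : G.Connected) : C.ncard ≤ Nat.card {v : V // ¬ IsCutVertex G v} := by
  have hbranch (x : C) : ∃ y : {v : V // ¬ IsCutVertex G v}, y.1 ∈ branch G C x := by
    obtain ⟨y, hy, hpre⟩ :=
      hC.exists_mem_branch_preconnected_induce_ne hG.preconnected x.2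
    exact ⟨⟨y, not_isCutVertex_of_preconnected_induce_ne hG hpre⟩, hy⟩
  choose f hf using hbranch
  have hinj : f.Injective := fun x w hxw => Subtype.ext <|
    (pairwiseDisjoint_branch hG.preconnected).elim_set x.2 w.2 (f x) (hf x) (hxw ▸ hf w)
  exact Nat.card_le_card_of_injective f hinj

end

/-- Let `G` be a connected simple graph with at least two vertices.  Then `G` has at
least two vertices that are not cut vertices; moreover, if `G` contains a cycle of
length `k`, then `G` has at least `k` vertices that are not cut vertices. -/
theorem two_non_cut_vertices {V : Type} [Fintype V] [DecidableEq V]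
    (G : SimpleGraph V) (hconn : G.Connected) (h2 : 2 ≤ Fintype.card V) :
    2 ≤ Nat.card {v : V // ¬ IsCutVertex G v} ∧
      ∀ (k : ℕ) (u : V) (c : G.Walk u u), c.IsCycle → c.length = k →
        k ≤ Nat.card {v : V // ¬ IsCutVertex G v} := by
  constructor
  · have : Nontrivial V := Fintype.one_lt_card_iff_nontrivial.1 h2
    obtain ⟨a⟩ := hconn.nonempty
    obtain ⟨b, hab⟩ := hconn.preconnected.exists_adj_of_nontrivial a
    have hpair : IsInseparable G {a, b} :=
      isInseparable_of_isClique (isClique_pair.2 fun _ => hab)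
    rw [← Set.ncard_pair hab.ne]
    exact hpair.ncard_le_card_not_isCutVertex hconn
  · rintro k u c hc rfl
    rw [← ncard_support_of_isCycle hc]
    exact (isInseparable_support_of_isCycle hc).ncard_le_card_not_isCutVertex hconn
end
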